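/- There exists a topological embedding h of the Baire space ℕ → ℕ into ℝ whose range is exactly the set of irrational numbers such that: if the continuum 𝔠 = 2^ℵ₀ is a regular cardinal, then for every generalized Luzin set L ⊆ ℝ and every generalized Sierpiński set S ⊆ ℝ, the preimage h⁻¹(L + S) of the algebraic sum L + S = {l + s : l ∈ L, s ∈ S} belongs to each of the tree ideals s₀, m₀, l₀ and cl₀. -/

import Mathlib

open Cardinal Set

/-- A tree on ω: a nonempty set of finite sequences closed under initial segments. -/
def IsTree (T : Set (List ℕ)) : Prop :=
  T.Nonempty ∧ ∀ s ∈ T, ∀ n : ℕ, s.take n ∈ T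

/-- The body of a tree: all infinite branches. -/
def treeBody (T : Set (List ℕ)) : Set (ℕ → ℕ) :=
  {x | ∀ n : ℕ, (List.ofFn fun i : Fin n => x i) ∈ T}

/-- Immediate successors of a node in a tree. -/
def succs (T : Set (List ℕ)) (t : List ℕ) : Set ℕ := {n | t ++ [n] ∈ T}

/-- Sacks (perfect) tree: every node has an extension with at least two immediate successors. -/
def IsSacksTree (T : Set (List ℕ)) : Prop :=
  IsTree T ∧ ∀ s ∈ T, ∃ t ∈ T, s <+: t ∧ (succs T t).Nontrivial

/-- Miller tree: every node has an extension with infinitely many immediate successors. -/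
def IsMillerTree (T : Set (List ℕ)) : Prop :=
  IsTree T ∧ ∀ s ∈ T, ∃ t ∈ T, s <+: t ∧ (succs T t).Infinite

/-- Laver tree: has a stem (a node comparable with every node) such that every node
extending the stem has infinitely many immediate successors. -/
def IsLaverTree (T : Set (List ℕ)) : Prop :=
  IsTree T ∧ ∃ s ∈ T, (∀ t ∈ T, s <+: t ∨ t <+: s) ∧
    ∀ t ∈ T, s <+: t → (succs T t).Infinite

/-- Complete Laver tree: every node has infinitely many immediate successors. -/
def IsCompleteLaverTree (T : Set (List ℕ)) : Prop :=
  IsTree T ∧ ∀ t ∈ T, (succs T t).Infinite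

/-- The tree ideal t₀ associated with a family of trees 𝕋. -/
def treeIdeal (𝕋 : Set (Set (List ℕ))) : Set (Set (ℕ → ℕ)) :=
  {A | ∀ P ∈ 𝕋, ∃ Q ∈ 𝕋, Q ⊆ P ∧ treeBody Q ∩ A = ∅}

/-- t-measurability with respect to a family of trees 𝕋. -/
def TMeasurable (𝕋 : Set (Set (List ℕ))) (A : Set (ℕ → ℕ)) : Prop :=
  ∀ P ∈ 𝕋, ∃ Q ∈ 𝕋, Q ⊆ P ∧ (treeBody Q ⊆ A ∨ treeBody Q ∩ A = ∅)

/-- 𝕋-Bernstein set: meets and omits the body of every tree in 𝕋. -/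
def TBernstein (𝕋 : Set (Set (List ℕ))) (B : Set (ℕ → ℕ)) : Prop :=
  ∀ T ∈ 𝕋, (B ∩ treeBody T).Nonempty ∧ (B \ treeBody T).Nonempty

/-- Generalized Luzin set: meets every meager set in size < |L|. -/
def IsGenLuzin (L : Set ℝ) : Prop :=
  ∀ M : Set ℝ, IsMeagre M → Cardinal.mk ↑(L ∩ M) < Cardinal.mk ↑L

/-- Generalized Sierpiński set: meets every Lebesgue null set in size < |S|. -/
def IsGenSierpinski (S : Set ℝ) : Prop :=
  ∀ N : Set ℝ, MeasureTheory.volume N = 0 → Cardinal.mk ↑(S ∩ N) < Cardinal.mk ↑S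

/-!
Let `h` identify Baire space with the irrationals. Restricting a tree at every second level of a
fusion to one of two disjoint halves of the available successors shows that every tree of each of
the four kinds has continuum many subtrees of its kind with pairwise disjoint bodies. Only countably
many of the images of these bodies under `h` have positive measure, so every tree has a subtree `Q`
whose body has a null image; the closure `F` of that image is still null, as it gains only rational
points.

There is a comeagre set `A` such that the set `N` of all `s` with `l + s ∈ F` for some `l ∈ A` is
null: for a compact part `K` of `F`, cover a dense sequence by open sets so small that the
corresponding translates of neighbourhoods of `K` have small total measure. Fewer than `𝔠` points of
`L` lie outside `A`, fewer than `𝔠` points of `S` lie in `N`, and every translate of `F`, being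
meagre and null, meets `L` and `S` in fewer than `𝔠` points. By regularity of `𝔠`, the set
`(L + S) ∩ F` has fewer than `𝔠` points, so it misses the image of one of continuum many subtrees of
`Q` with pairwise disjoint bodies.
-/

/-! ### Fusion of trees -/

section Trees

open Relation Function

lemma IsTree.mem_of_prefix {T : Set (List ℕ)} (hT : IsTree T) {s t : List ℕ} (hst : s <+: t)
    (ht : t ∈ T) : s ∈ T := by
  rw [List.prefix_iff_eq_take.1 hst]
  exact hT.2 t ht _

lemma IsTree.nil_mem {T : Set (List ℕ)} (hT : IsTree T) : [] ∈ T :=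
  let ⟨_, hs⟩ := hT.1
  hT.mem_of_prefix List.nil_prefix hs

/-- A step of a fusion: a node `t` of level `k` is prolonged by a digit admitted by `A k t`, and the
result is moved by `ext` to a node of level `k + 1`. -/
inductive FusionStep (ext : List ℕ → List ℕ) (A : ℕ → List ℕ → Set ℕ) :
    ℕ × List ℕ → ℕ × List ℕ → Prop
  | mk {k : ℕ} {t : List ℕ} {n : ℕ} (hn : n ∈ A k t) :
    FusionStep ext A (k, t) (k + 1, ext (t ++ [n]))

/-- The tree of initial segments of the nodes obtained by a fusion that starts at the node `p.2`,
considered as a node of level `p.1`. -/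
def fusionTree (ext : List ℕ → List ℕ) (A : ℕ → List ℕ → Set ℕ) (p : ℕ × List ℕ) :
    Set (List ℕ) :=
  {u | ∃ q, ReflTransGen (FusionStep ext A) p q ∧ u <+: q.2}

variable {ext : List ℕ → List ℕ} {A B : ℕ → List ℕ → Set ℕ} {p q : ℕ × List ℕ} {k n : ℕ}
  {s t u : List ℕ} {P T : Set (List ℕ)} {x : ℕ → ℕ}

lemma mem_fusionTree_of_reflTransGen (h : ReflTransGen (FusionStep ext A) p q) :
    q.2 ∈ fusionTree ext A p :=
  ⟨q, h, List.prefix_rfl⟩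

lemma isTree_fusionTree (ext : List ℕ → List ℕ) (A : ℕ → List ℕ → Set ℕ) (p : ℕ × List ℕ) :
    IsTree (fusionTree ext A p) :=
  ⟨⟨p.2, mem_fusionTree_of_reflTransGen .refl⟩,
    fun _ ⟨q, hq, hu⟩ n => ⟨q, hq, (List.take_prefix n _).trans hu⟩⟩

lemma fusionTree_subset (hP : IsTree P) (hext : ∀ t ∈ P, ext t ∈ P)
    (hA : ∀ k t, A k t ⊆ succs P t) (hp : p.2 ∈ P) : fusionTree ext A p ⊆ P := by
  rintro u ⟨q, hq, hu⟩
  refine hP.mem_of_prefix hu ?_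
  induction hq with
  | refl => exact hp
  | tail _ hstep _ =>
    obtain ⟨hn⟩ := hstep
    exact hext _ (hA _ _ hn)

lemma subset_succs_fusionTree (hext : ∀ s, s <+: ext s)
    (h : ReflTransGen (FusionStep ext A) p (k, t)) : A k t ⊆ succs (fusionTree ext A p) t :=
  fun _ hn => ⟨_, h.tail ⟨hn⟩, hext _⟩

lemma prefix_of_reflTransGen_fusionStep (hext : ∀ s, s <+: ext s)
    (h : ReflTransGen (FusionStep ext A) p q) : p.2 <+: q.2 := by
  induction h with
  | refl => exact List.prefix_rfl
  | tail _ hstep ih =>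
    obtain ⟨_⟩ := hstep
    exact ih.trans ((List.prefix_append _ _).trans (hext _))

lemma exists_step_of_mem_fusionTree (hext : ∀ s, s <+: ext s)
    (hu : u ∈ fusionTree ext A (k, t)) (hlen : t.length < u.length) :
    u[t.length] ∈ A k t ∧ u ∈ fusionTree ext A (k + 1, ext (t ++ [u[t.length]])) := by
  obtain ⟨q, hq, huq⟩ := hu
  obtain rfl | ⟨r, hstep, hrq⟩ := hq.cases_head
  · exact absurd huq.length_le hlen.not_ge
  · obtain @⟨_, _, n, hn⟩ := hstep
    have hprefix : t ++ [n] <+: q.2 :=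
      (hext _).trans (prefix_of_reflTransGen_fusionStep hext hrq)
    have hdigit : u[t.length] = n := by
      rw [huq.getElem, ← hprefix.getElem (by simp), List.getElem_concat_length rfl]
    exact ⟨hdigit ▸ hn, q, hdigit ▸ hrq, huq⟩

lemma IsTree.mem_treeBody_of_forall_gt (hT : IsTree T) (m : ℕ)
    (h : ∀ n > m, (List.ofFn fun i : Fin n => x i) ∈ T) : x ∈ treeBody T := by
  intro n
  obtain ⟨N, hN⟩ := exists_gt (max n m)
  obtain ⟨hnN, hmN⟩ := max_lt_iff.1 hN
  convert hT.2 _ (h N hmN) n using 1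
  apply List.ext_getElem
  · rw [List.length_ofFn, List.length_take, List.length_ofFn, min_eq_left hnN.le]
  · simp only [List.getElem_ofFn, List.getElem_take, implies_true]

lemma mem_treeBody_fusionTree_succ (hext : ∀ s, s <+: ext s)
    (hx : x ∈ treeBody (fusionTree ext A (k, t))) :
    x t.length ∈ A k t ∧
      x ∈ treeBody (fusionTree ext A (k + 1, ext (t ++ [x t.length]))) := by
  have hstep (m : ℕ) (hm : t.length < m) :
      x t.length ∈ A k t ∧ (List.ofFn fun i : Fin m => x i) ∈
        fusionTree ext A (k + 1, ext (t ++ [x t.length])) := by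
    have h := exists_step_of_mem_fusionTree hext (hx m) (by rwa [List.length_ofFn])
    rwa [List.getElem_ofFn] at h
  exact ⟨(hstep _ (Nat.lt_succ_self _)).1,
    (isTree_fusionTree _ _ _).mem_treeBody_of_forall_gt t.length fun m hm => (hstep m hm).2⟩

lemma disjoint_treeBody_fusionTree (hext : ∀ s, s <+: ext s) (j : ℕ)
    (hAB : ∀ t, Disjoint (A (k + j) t) (B (k + j) t)) :
    Disjoint (treeBody (fusionTree ext A (k, t))) (treeBody (fusionTree ext B (k, t))) := by
  rw [Set.disjoint_left]
  intro x hxA hxB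
  induction j generalizing k t with
  | zero =>
    exact Set.disjoint_left.1 (hAB t) (mem_treeBody_fusionTree_succ hext hxA).1
      (mem_treeBody_fusionTree_succ hext hxB).1
  | succ j ih =>
    refine ih (fun t => ?_) (mem_treeBody_fusionTree_succ hext hxA).2
      (mem_treeBody_fusionTree_succ hext hxB).2
    rw [Nat.succ_add_eq_add_succ]
    exact hAB t

lemma exists_reflTransGen_of_mem_fusionTree_id (hu : u ∈ fusionTree id A (k, t)) (htu : t <+: u) :
    ∃ j, ReflTransGen (FusionStep id A) (k, t) (j, u) := by
  obtain ⟨q, hq, huq⟩ := hu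
  induction hq with
  | refl =>
    obtain rfl := huq.eq_of_length_le htu.length_le
    exact ⟨k, .refl⟩
  | tail hr hstep ih =>
    obtain @⟨j, r, n, hn⟩ := hstep
    obtain rfl | hur := List.prefix_concat_iff.1 huq
    · exact ⟨_, hr.tail ⟨hn⟩⟩
    · exact ih hur

open Classical in
/-- The elements of `X` whose rank in the increasing enumeration of `X`, counted from `0`, is odd
(for `b = true`) or even (for `b = false`). -/
noncomputable def rankParityClass (X : Set ℕ) (b : Bool) : Set ℕ :=
  {n ∈ X | (Nat.count (· ∈ X) n).bodd = b}

lemma rankParityClass_subset (X : Set ℕ) (b : Bool) : rankParityClass X b ⊆ X :=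
  Set.sep_subset _ _

lemma pairwise_disjoint_rankParityClass (X : Set ℕ) :
    Pairwise (Disjoint on rankParityClass X) := fun _ _ hbc =>
  Set.disjoint_left.2 fun _ hb hc => hbc (hb.2.symm.trans hc.2)

lemma bodd_two_mul_add_toNat (k : ℕ) (b : Bool) : (2 * k + b.toNat).bodd = b := by
  cases b <;> simp

lemma infinite_rankParityClass {X : Set ℕ} (hX : X.Infinite) (b : Bool) :
    (rankParityClass X b).Infinite := by
  classical
  refine Set.infinite_of_injective_forall_mem (f := fun k => Nat.nth (· ∈ X) (2 * k + b.toNat))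
    (fun i j hij => ?_) fun k => ⟨Nat.nth_mem_of_infinite hX _, ?_⟩
  · have := Nat.nth_injective hX hij
    omega
  · rw [Nat.count_nth_of_infinite (p := (· ∈ X)) hX, bodd_two_mul_add_toNat]

lemma nonempty_rankParityClass {X : Set ℕ} (hX : X.Nontrivial) (b : Bool) :
    (rankParityClass X b).Nonempty := by
  classical
  have hb (hf : X.Finite) : b.toNat < hf.toFinset.card :=
    b.toNat_lt.trans_le <| Finset.one_lt_card_iff_nontrivial.2 <| by
      simpa only [Finset.Nontrivial, hf.coe_toFinset] using hX
  refine ⟨Nat.nth (· ∈ X) b.toNat, Nat.nth_mem _ hb, ?_⟩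
  rw [Nat.count_nth (p := (· ∈ X)) hb]
  simpa using bodd_two_mul_add_toNat 0 b

/-- The successors of `t` in `P` admitted at level `k` of a fusion that codes `f` at its even
levels. The odd levels stay unrestricted so that the fusion keeps the branching of `P`. -/
noncomputable def codedSuccs (P : Set (List ℕ)) (f : ℕ → Bool) (k : ℕ) (t : List ℕ) : Set ℕ :=
  if Even k then rankParityClass (succs P t) (f (k / 2)) else succs P t

variable {f g : ℕ → Bool}

lemma codedSuccs_subset : codedSuccs P f k t ⊆ succs P t := by
  unfold codedSuccs
  split_ifs
  exacts [rankParityClass_subset _ _, Set.Subset.rfl]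

lemma codedSuccs_of_odd (hk : Odd k) : codedSuccs P f k t = succs P t :=
  if_neg (Nat.not_even_iff_odd.2 hk)

lemma nonempty_codedSuccs (ht : (succs P t).Nontrivial) : (codedSuccs P f k t).Nonempty := by
  unfold codedSuccs
  split_ifs
  exacts [nonempty_rankParityClass ht _, ht.nonempty]

lemma infinite_codedSuccs (ht : (succs P t).Infinite) : (codedSuccs P f k t).Infinite := by
  unfold codedSuccs
  split_ifs
  exacts [infinite_rankParityClass ht _, ht]

lemma pairwise_disjoint_treeBody_fusionTree_codedSuccs (hext : ∀ s, s <+: ext s)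
    (P : Set (List ℕ)) (t : List ℕ) :
    Pairwise (Disjoint on fun f => treeBody (fusionTree ext (codedSuccs P f) (0, t))) := by
  intro f g hfg
  obtain ⟨i, hi⟩ := Function.ne_iff.1 hfg
  refine disjoint_treeBody_fusionTree hext (2 * i) fun t => ?_
  simpa [codedSuccs] using pairwise_disjoint_rankParityClass (succs P t) hi

/-- Every tree of the family `𝕋` has continuum many subtrees in `𝕋` with pairwise disjoint
bodies. -/
def SplitsIntoContinuum (𝕋 : Set (Set (List ℕ))) : Prop :=
  ∀ P ∈ 𝕋, ∃ Q : (ℕ → Bool) → Set (List ℕ),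
    (∀ f, Q f ∈ 𝕋 ∧ Q f ⊆ P) ∧ Pairwise (Disjoint on fun f => treeBody (Q f))

/-- Every node of the tree `T` has an extension in `T` whose set of immediate successors satisfies
`B`. Sacks and Miller trees are the cases `B = Set.Nontrivial` and `B = Set.Infinite`. -/
def IsBranchingTree (B : Set ℕ → Prop) (T : Set (List ℕ)) : Prop :=
  IsTree T ∧ ∀ s ∈ T, ∃ t ∈ T, s <+: t ∧ B (succs T t)

lemma IsBranchingTree.exists_extension_map {B : Set ℕ → Prop} (hP : IsBranchingTree B P) :
    ∃ ext : List ℕ → List ℕ, (∀ s, s <+: ext s) ∧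
      (∀ s ∈ P, ext s ∈ P) ∧ ∀ s ∈ P, B (succs P (ext s)) := by
  have hext (s : List ℕ) : ∃ t, s <+: t ∧ (s ∈ P → t ∈ P ∧ B (succs P t)) := by
    by_cases hs : s ∈ P
    · obtain ⟨t, ht, hst, hB⟩ := hP.2 s hs
      exact ⟨t, hst, fun _ => ⟨ht, hB⟩⟩
    · exact ⟨s, List.prefix_rfl, fun h => absurd h hs⟩
  choose ext hprefix hmem using hext
  exact ⟨ext, hprefix, fun s hs => (hmem s hs).1, fun s hs => (hmem s hs).2⟩

theorem splitsIntoContinuum_isBranchingTree {B : Set ℕ → Prop} (hmono : Monotone B)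
    (hB : ∀ X, B X → X.Nontrivial) : SplitsIntoContinuum {T | IsBranchingTree B T} := by
  intro P hP
  obtain ⟨ext, hext, hextP, hextB⟩ := IsBranchingTree.exists_extension_map hP
  have hroot := hP.1.nil_mem
  let Q (f : ℕ → Bool) := fusionTree ext (codedSuccs P f) (0, ext [])
  have hQP (f : ℕ → Bool) : Q f ⊆ P :=
    fusionTree_subset hP.1 hextP (fun _ _ => codedSuccs_subset) (hextP _ hroot)
  refine ⟨Q, fun f => ⟨⟨isTree_fusionTree _ _ _, ?_⟩, hQP f⟩,
    pairwise_disjoint_treeBody_fusionTree_codedSuccs hext P _⟩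
  rintro u ⟨⟨k, t⟩, ht, hut⟩
  have htB : B (succs P t) := by
    obtain h | ⟨r, hr, hstep⟩ := ht.cases_tail
    · obtain ⟨rfl, rfl⟩ := Prod.mk.inj h
      exact hextB _ hroot
    · obtain ⟨hn⟩ := hstep
      exact hextB _ (codedSuccs_subset hn)
  have hodd {j : ℕ} {v : List ℕ} (hj : Odd j) (hv : B (succs P v))
      (hreach : ReflTransGen (FusionStep ext (codedSuccs P f)) (0, ext []) (j, v)) :
      B (succs (Q f) v) :=
    hmono (codedSuccs_of_odd hj ▸ subset_succs_fusionTree hext hreach) hv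
  rcases Nat.even_or_odd k with hk | hk
  · obtain ⟨n, hn⟩ := nonempty_codedSuccs (f := f) (k := k) (hB _ htB)
    have hreach := ht.tail ⟨hn⟩
    have hmem := mem_fusionTree_of_reflTransGen hreach
    exact ⟨_, hmem, hut.trans ((List.prefix_append _ _).trans (hext _)),
      hodd hk.add_one (hextB _ (codedSuccs_subset hn)) hreach⟩
  · exact ⟨t, mem_fusionTree_of_reflTransGen ht, hut, hodd hk htB ht⟩

theorem splitsIntoContinuum_isSacksTree : SplitsIntoContinuum {T | IsSacksTree T} :=
  splitsIntoContinuum_isBranchingTree (fun _ _ hXY hX => hX.mono hXY) fun _ hX => hX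

theorem splitsIntoContinuum_isMillerTree : SplitsIntoContinuum {T | IsMillerTree T} :=
  splitsIntoContinuum_isBranchingTree (fun _ _ hXY hX => hX.mono hXY) fun _ hX => hX.nontrivial

lemma exists_disjoint_subtrees_infinite_above (hP : IsTree P) (hs : s ∈ P)
    (hinf : ∀ t ∈ P, s <+: t → (succs P t).Infinite) :
    ∃ Q : (ℕ → Bool) → Set (List ℕ),
      (∀ f, IsTree (Q f) ∧ Q f ⊆ P ∧ s ∈ Q f ∧ ∀ t ∈ Q f, s <+: t → (succs (Q f) t).Infinite) ∧
      Pairwise (Disjoint on fun f => treeBody (Q f)) := by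
  have hid (s : List ℕ) : s <+: id s := List.prefix_rfl
  have hQP (f : ℕ → Bool) : fusionTree id (codedSuccs P f) (0, s) ⊆ P :=
    fusionTree_subset hP (fun _ => id) (fun _ _ => codedSuccs_subset) hs
  refine ⟨fun f => fusionTree id (codedSuccs P f) (0, s), fun f => ⟨isTree_fusionTree _ _ _, hQP f,
    mem_fusionTree_of_reflTransGen .refl, fun t ht hst => ?_⟩,
    pairwise_disjoint_treeBody_fusionTree_codedSuccs hid P s⟩
  obtain ⟨k, hk⟩ := exists_reflTransGen_of_mem_fusionTree_id ht hst
  exact (infinite_codedSuccs (hinf t (hQP f ht) hst)).mono (subset_succs_fusionTree hid hk)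

theorem splitsIntoContinuum_isLaverTree : SplitsIntoContinuum {T | IsLaverTree T} := by
  rintro P ⟨hP, s, hs, hcomp, hinf⟩
  obtain ⟨Q, hQ, hdisj⟩ := exists_disjoint_subtrees_infinite_above hP hs hinf
  refine ⟨Q, fun f => ?_, hdisj⟩
  obtain ⟨htree, hsub, hmem, hQinf⟩ := hQ f
  exact ⟨⟨htree, s, hmem, fun t ht => hcomp t (hsub ht), hQinf⟩, hsub⟩

theorem splitsIntoContinuum_isCompleteLaverTree :
    SplitsIntoContinuum {T | IsCompleteLaverTree T} := by
  rintro P ⟨hP, hinf⟩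
  obtain ⟨Q, hQ, hdisj⟩ :=
    exists_disjoint_subtrees_infinite_above hP hP.nil_mem fun t ht _ => hinf t ht
  refine ⟨Q, fun f => ?_, hdisj⟩
  obtain ⟨htree, hsub, -, hQinf⟩ := hQ f
  exact ⟨⟨htree, fun t ht => hQinf t ht List.nil_prefix⟩, hsub⟩

end Trees

/-! ### Baire space and the irrationals -/

section BaireSpace

open Function Filter Topology TopologicalSpace CantorScheme PiNat
open scoped ENNReal

section Partition

variable {X : Type*} [TopologicalSpace X] {U : Set X} {ι : Type*} {W : ι → Set X}

lemma exists_seq_isClopen_refinement [SecondCountableTopology X]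
    (hX : IsTopologicalBasis {s : Set X | IsClopen s}) (hU : IsOpen U) (hne : U.Nonempty)
    (hW : ∀ i, IsOpen (W i)) (hUW : U ⊆ ⋃ i, W i) :
    ∃ C : ℕ → Set X, (∀ n, IsClopen (C n)) ∧ (∀ n, ∃ i, C n ⊆ W i) ∧ ⋃ n, C n = U := by
  let S : Set (Set X) := {C | IsClopen C ∧ C ⊆ U ∧ ∃ i, C ⊆ W i}
  have hSU : ⋃₀ S = U := by
    refine (sUnion_subset fun C hC => hC.2.1).antisymm fun x hx => ?_
    obtain ⟨i, hi⟩ := mem_iUnion.1 (hUW hx)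
    obtain ⟨C, hC, hxC, hCUW⟩ :=
      hX.exists_subset_of_mem_open (mem_inter hx hi) (hU.inter (hW i))
    exact ⟨C, ⟨hC, hCUW.trans inter_subset_left, i, hCUW.trans inter_subset_right⟩, hxC⟩
  obtain ⟨T, hT, hTS, hTU⟩ := isOpen_sUnion_countable S fun C hC => hC.1.isOpen
  have hTne : T.Nonempty := by
    rw [← hSU, ← hTU] at hne
    exact hne.of_sUnion
  obtain ⟨C, rfl⟩ := hT.exists_eq_range hTne
  have hCS (n : ℕ) : C n ∈ S := hTS (mem_range_self n)
  exact ⟨C, fun n => (hCS n).1, fun n => (hCS n).2.2, by rw [← hSU, ← hTU, sUnion_range]⟩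

theorem exists_isClopen_partition_refinement [SecondCountableTopology X]
    (hX : IsTopologicalBasis {s : Set X | IsClopen s}) (hU : IsOpen U)
    (hW : ∀ i, IsOpen (W i)) (hUW : U ⊆ ⋃ i, W i)
    (hfin : ∀ t : Finset ι, ¬ U ⊆ ⋃ i ∈ t, W i) :
    ∃ V : ℕ → Set X, (∀ n, IsClopen (V n)) ∧ (∀ n, (V n).Nonempty) ∧ (∀ n, ∃ i, V n ⊆ W i) ∧
      Pairwise (Disjoint on V) ∧ ⋃ n, V n = U := by
  classical
  have hne : U.Nonempty := by
    by_contra hU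
    exact hfin ∅ (by simp [not_nonempty_iff_eq_empty.1 hU])
  obtain ⟨C, hC, hCW, hCU⟩ := exists_seq_isClopen_refinement hX hU hne hW hUW
  choose i hi using hCW
  let D := disjointed C
  have hDU : ⋃ n, D n = U := iUnion_disjointed.trans hCU
  let s : Set ℕ := {n | (D n).Nonempty}
  have hUs : U ⊆ ⋃ n ∈ s, D n := by
    intro x hx
    obtain ⟨n, hn⟩ := mem_iUnion.1 (hDU.symm ▸ hx)
    exact mem_biUnion (show n ∈ s from ⟨x, hn⟩) hn
  have hs : s.Infinite := by
    intro hs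
    refine hfin (hs.toFinset.image i) (hUs.trans (iUnion₂_subset fun n hn => ?_))
    exact (disjointed_subset C n).trans
      ((hi n).trans (subset_biUnion_of_mem (u := W)
        (Finset.mem_image_of_mem i (hs.mem_toFinset.2 hn))))
  have : Infinite s := hs.to_subtype
  let e := Nat.orderEmbeddingOfSet s
  have he : range e = s := Nat.orderEmbeddingOfSet_range s
  refine ⟨D ∘ e, fun n => disjointedRec (fun _ i ht => ht.diff (hC i)) (hC _),
    fun n => he.subset (mem_range_self n),
    fun n => ⟨i (e n), (disjointed_subset C _).trans (hi _)⟩,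
    fun m n hmn => disjoint_disjointed C (e.injective.ne hmn), ?_⟩
  refine (iUnion_subset fun n => hDU ▸ subset_iUnion D (e n)).antisymm (hUs.trans ?_)
  rw [← he, biUnion_range]
  rfl

end Partition

theorem exists_isClopen_partition_ediam_le {X : Type*} [PseudoMetricSpace X]
    [SecondCountableTopology X] (hX : IsTopologicalBasis {s : Set X | IsClopen s}) {U : Set X}
    (hU : IsOpen U) (hcomp : ¬ IsCompact U) {ε : ℝ≥0∞} (hε : ε ≠ 0) :
    ∃ V : ℕ → Set X, (∀ n, IsClopen (V n)) ∧ (∀ n, (V n).Nonempty) ∧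
      (∀ n, Metric.ediam (V n) ≤ ε) ∧ Pairwise (Disjoint on V) ∧ ⋃ n, V n = U := by
  obtain ⟨ι, W, hW, hUW, hfin⟩ : ∃ (ι : Type _) (W : ι → Set X), (∀ i, IsOpen (W i)) ∧
      U ⊆ ⋃ i, W i ∧ ∀ t : Finset ι, ¬ U ⊆ ⋃ i ∈ t, W i := by
    rw [isCompact_iff_finite_subcover] at hcomp
    push Not at hcomp
    exact hcomp
  have hε2 : 0 < ε / 2 := ENNReal.half_pos hε
  let W' (p : ι × X) : Set X := W p.1 ∩ Metric.eball p.2 (ε / 2)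
  have hUW' : U ⊆ ⋃ p, W' p := fun x hx =>
    let ⟨i, hi⟩ := mem_iUnion.1 (hUW hx)
    mem_iUnion.2 ⟨(i, x), hi, Metric.mem_eball_self hε2⟩
  classical
  have hfin' (t : Finset (ι × X)) : ¬ U ⊆ ⋃ p ∈ t, W' p := fun h =>
    hfin (t.image Prod.fst) <| h.trans <| iUnion₂_subset fun (p : ι × X) hp =>
      inter_subset_left.trans <|
        subset_biUnion_of_mem (u := W) (Finset.mem_image_of_mem Prod.fst hp)
  obtain ⟨V, hV, hne, hVW, hdisj, hVU⟩ := exists_isClopen_partition_refinement hX hU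
    (fun (p : ι × X) => (hW p.1).inter Metric.isOpen_eball) hUW' hfin'
  refine ⟨V, hV, hne, fun n => ?_, hdisj, hVU⟩
  obtain ⟨p, hp⟩ := hVW n
  calc Metric.ediam (V n) ≤ Metric.ediam (Metric.eball p.2 (ε / 2)) :=
        Metric.ediam_mono (hp.trans inter_subset_right)
    _ ≤ 2 * (ε / 2) := Metric.ediam_eball_le
    _ = ε := ENNReal.mul_div_cancel two_ne_zero ENNReal.ofNat_ne_top

/-- A scheme of nonempty clopen sets in which every set is partitioned into countably many sets of
the next level and whose diameters vanish along branches: the scheme of the sets of points whose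
coordinates in Baire space begin with a given sequence. As in `CantorScheme`, sequences are read
from right to left. -/
structure IsBaireScheme {X : Type*} [PseudoMetricSpace X] (A : List ℕ → Set X) : Prop where
  nil : A [] = Set.univ
  isClopen (l : List ℕ) : IsClopen (A l)
  nonempty (l : List ℕ) : (A l).Nonempty
  iUnion_cons (l : List ℕ) : ⋃ n, A (n :: l) = A l
  disjoint : CantorScheme.Disjoint A
  vanishingDiam : VanishingDiam A

theorem exists_isBaireScheme {X : Type*} [PseudoMetricSpace X] [SecondCountableTopology X]
    [Nonempty X] (hX : IsTopologicalBasis {s : Set X | IsClopen s})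
    (hcomp : ∀ K : Set X, IsCompact K → interior K = ∅) :
    ∃ A : List ℕ → Set X, IsBaireScheme A := by
  let 𝒰 := {U : Set X // IsClopen U ∧ U.Nonempty}
  have hpart (U : 𝒰) (k : ℕ) : ∃ V : ℕ → 𝒰, (∀ n, Metric.ediam (V n).1 ≤ (k : ℝ≥0∞)⁻¹) ∧
      Pairwise (Disjoint on fun n => (V n).1) ∧ ⋃ n, (V n).1 = U.1 := by
    obtain ⟨U, hU, hne⟩ := U
    have hUcomp : ¬ IsCompact U := fun hK =>
      hne.ne_empty (hU.isOpen.interior_eq ▸ hcomp U hK)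
    obtain ⟨V, hV, hVne, hdiam, hdisj, hVU⟩ := exists_isClopen_partition_ediam_le hX hU.isOpen
      hUcomp (ENNReal.inv_ne_zero.2 (ENNReal.natCast_ne_top k))
    exact ⟨fun n => ⟨V n, hV n, hVne n⟩, hdiam, hdisj, hVU⟩
  choose V hdiam hdisj hVU using hpart
  let A (l : List ℕ) : 𝒰 :=
    l.rec ⟨univ, isClopen_univ, univ_nonempty⟩ fun n l U => V U l.length n
  refine ⟨fun l => (A l).1, rfl, fun l => (A l).2.1, fun l => (A l).2.2,
    fun l => hVU (A l) l.length, fun l => hdisj (A l) l.length, fun x => ?_⟩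
  rw [← tendsto_add_atTop_iff_nat 1]
  refine tendsto_of_tendsto_of_tendsto_of_le_of_le tendsto_const_nhds
    ENNReal.tendsto_inv_nat_nhds_zero (fun _ => zero_le) fun n => ?_
  exact (hdiam (A (res x n)) (res x n).length (x n)).trans_eq (by rw [res_length])

namespace IsBaireScheme

variable {X : Type*} [MetricSpace X] {A : List ℕ → Set X}

lemma closureAntitone (hA : IsBaireScheme A) : ClosureAntitone A := fun l n => by
  rw [(hA.isClopen _).isClosed.closure_eq, ← hA.iUnion_cons l]
  exact subset_iUnion (fun n => A (n :: l)) n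

lemma exists_mem_res (hA : IsBaireScheme A) (y : X) : ∃ x : ℕ → ℕ, ∀ n, y ∈ A (res x n) := by
  have hstep (l : {l // y ∈ A l}) : ∃ n, y ∈ A (n :: l.1) := by
    simpa only [← hA.iUnion_cons l, mem_iUnion] using l.2
  choose d hd using hstep
  let l (n : ℕ) : {l // y ∈ A l} :=
    n.rec ⟨[], hA.nil ▸ mem_univ y⟩ fun _ l => ⟨d l :: l.1, hd l⟩
  refine ⟨fun n => d (l n), fun n => ?_⟩
  have hres : res (fun n => d (l n)) n = (l n).1 := by
    induction n with
    | zero => rfl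
    | succ n ih => rw [res_succ, ih]
  exact hres ▸ (l n).2

lemma eq_of_forall_mem (hA : IsBaireScheme A) {x : ℕ → ℕ} {y z : X} (hy : ∀ n, y ∈ A (res x n))
    (hz : ∀ n, z ∈ A (res x n)) : y = z :=
  eq_of_forall_dist_le fun ε hε =>
    let ⟨n, hn⟩ := hA.vanishingDiam.dist_lt ε hε x
    (hn y (hy n) z (hz n)).le

lemma res_eq_res_of_mem (hA : IsBaireScheme A) {x x' : ℕ → ℕ} {y : X} {n : ℕ}
    (h : y ∈ A (res x n)) (h' : y ∈ A (res x' n)) : res x n = res x' n := by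
  induction n with
  | zero => rfl
  | succ n ih =>
    have hres := ih (hA.closureAntitone.antitone _ _ h) (hA.closureAntitone.antitone _ _ h')
    rw [res_succ, hres] at h
    by_contra hne
    have hx : x n ≠ x' n := fun hx => hne (by rw [res_succ, res_succ, hres, hx])
    exact Set.disjoint_left.1 (hA.disjoint _ hx) h h'

theorem nonempty_homeomorph [CompleteSpace X] (hA : IsBaireScheme A) :
    Nonempty ((ℕ → ℕ) ≃ₜ X) := by
  have hdom : (inducedMap A).1 = Set.univ :=
    hA.closureAntitone.map_of_vanishingDiam hA.vanishingDiam hA.nonempty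
  let f (x : ℕ → ℕ) : X := (inducedMap A).2 ⟨x, hdom ▸ mem_univ x⟩
  have hmem (x : ℕ → ℕ) (n : ℕ) : f x ∈ A (res x n) := map_mem _ n
  have hcont : Continuous f := hA.vanishingDiam.map_continuous.comp (by fun_prop)
  have hinj : Injective f := fun x y hxy => congrArg Subtype.val (hA.disjoint.map_injective hxy)
  have hcoord {x : ℕ → ℕ} {y : X} (hy : ∀ n, y ∈ A (res x n)) : f x = y :=
    hA.eq_of_forall_mem (hmem x) hy
  have hsurj : Surjective f := fun y => (hA.exists_mem_res y).imp fun _ => hcoord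
  have himage (x : ℕ → ℕ) (n : ℕ) : f '' cylinder x n = A (res x n) := by
    refine (image_subset_iff.2 fun y hy => ?_).antisymm fun z hz => ?_
    · rw [cylinder_eq_res] at hy
      exact hy ▸ hmem y n
    · obtain ⟨y, rfl⟩ := hsurj z
      refine mem_image_of_mem f ?_
      rw [cylinder_eq_res]
      exact hA.res_eq_res_of_mem (hmem y n) hz
  have hopen : IsOpenMap f := by
    rw [(isTopologicalBasis_cylinders _).isOpenMap_iff]
    rintro _ ⟨x, n, rfl⟩
    exact himage x n ▸ (hA.isClopen _).isOpen
  exact ⟨(Equiv.ofBijective f ⟨hinj, hsurj⟩).toHomeomorphOfContinuousOpen hcont hopen⟩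

end IsBaireScheme

/-- The Alexandrov–Urysohn characterization of Baire space. -/
theorem nonempty_homeomorph_of_isCompact_interior_eq_empty {X : Type*} [TopologicalSpace X]
    [PolishSpace X] [Nonempty X] (hX : IsTopologicalBasis {s : Set X | IsClopen s})
    (hcomp : ∀ K : Set X, IsCompact K → interior K = ∅) : Nonempty ((ℕ → ℕ) ≃ₜ X) := by
  let := upgradeIsCompletelyMetrizable X
  obtain ⟨A, hA⟩ := exists_isBaireScheme hX hcomp
  exact hA.nonempty_homeomorph

theorem polishSpace_of_isGδ {X : Type*} [TopologicalSpace X] [PolishSpace X] {s : Set X}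
    (hs : IsGδ s) : PolishSpace s := by
  obtain ⟨U, hU, rfl⟩ := isGδ_iff_eq_iInter_nat.1 hs
  have hpolish (n : ℕ) : PolishSpace (U n) := (hU n).polishSpace
  let φ (x : ⋂ n, U n) (n : ℕ) : U n := ⟨x, mem_iInter.1 x.2 n⟩
  have hφ : IsEmbedding φ :=
    .of_comp (g := fun y => (y 0 : X)) (by fun_prop) (by fun_prop) IsEmbedding.subtypeVal
  have hrange : range φ = ⋂ n, {y | (y n : X) = y 0} := by
    ext y
    simp only [mem_iInter, mem_ofPred_eq]
    refine ⟨?_, fun hy => ⟨⟨y 0, mem_iInter.2 fun n => hy n ▸ (y n).2⟩, ?_⟩⟩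
    · rintro ⟨x, rfl⟩ n
      rfl
    · exact funext fun n => Subtype.ext (hy n).symm
  refine IsClosedEmbedding.polishSpace ⟨hφ, hrange ▸ isClosed_iInter fun n => ?_⟩
  exact isClosed_eq (by fun_prop) (by fun_prop)

lemma isTopologicalBasis_isClopen_subtype {X : Type*} [LinearOrder X] [TopologicalSpace X]
    [OrderTopology X] [DenselyOrdered X] [NoMinOrder X] [NoMaxOrder X] {s : Set X}
    (hs : Dense sᶜ) : IsTopologicalBasis {t : Set s | IsClopen t} := by
  refine isTopologicalBasis_of_isOpen_of_nhds (fun _ ht => ht.isOpen) fun x t hxt ht => ?_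
  obtain ⟨u, hu, rfl⟩ := isOpen_induced_iff.1 ht
  obtain ⟨a, b, ⟨hax, hxb⟩, hab⟩ := mem_nhds_iff_exists_Ioo_subset.1 (hu.mem_nhds hxt)
  obtain ⟨p, hp, hap, hpx⟩ := hs.exists_between hax
  obtain ⟨q, hq, hxq, hqb⟩ := hs.exists_between hxb
  have hIcc : ((↑) : s → X) ⁻¹' Ioo p q = (↑) ⁻¹' Icc p q := by
    ext y
    have hpy : (y : X) ≠ p := fun h => hp (h ▸ y.2)
    have hqy : (y : X) ≠ q := fun h => hq (h ▸ y.2)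
    exact ⟨fun h => Ioo_subset_Icc_self h, fun h => ⟨h.1.lt_of_ne hpy.symm, h.2.lt_of_ne hqy⟩⟩
  have hclosed : IsClosed (((↑) : s → X) ⁻¹' Ioo p q) :=
    hIcc ▸ isClosed_Icc.preimage continuous_subtype_val
  exact ⟨_, ⟨hclosed, isOpen_Ioo.preimage continuous_subtype_val⟩, ⟨hpx, hxq⟩,
    fun y hy => hab (Ioo_subset_Ioo hap.le hqb.le hy)⟩

lemma interior_eq_empty_of_isCompact_subtype {X : Type*} [TopologicalSpace X] [T2Space X]
    {s : Set X} (hs : Dense s) (hsc : Dense sᶜ) {K : Set s} (hK : IsCompact K) :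
    interior K = ∅ := by
  obtain ⟨U, hU, hUK⟩ := isOpen_induced_iff.1 (isOpen_interior (s := K))
  have hsub : U ⊆ (↑) '' K := by
    refine (hs.open_subset_closure_inter hU).trans
      (closure_minimal ?_ (hK.image continuous_subtype_val).isClosed)
    rintro x ⟨hxU, hxs⟩
    exact ⟨⟨x, hxs⟩, interior_subset (hUK.subset hxU), rfl⟩
  have hUempty : U = ∅ := by
    by_contra hne
    obtain ⟨x, hxU, hxs⟩ := hsc.inter_open_nonempty U hU (nonempty_iff_ne_empty.2 hne)
    obtain ⟨y, -, rfl⟩ := hsub hxU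
    exact hxs y.2
  rw [← hUK, hUempty, preimage_empty]

theorem exists_isEmbedding_range_eq_irrational :
    ∃ h : (ℕ → ℕ) → ℝ, IsEmbedding h ∧ range h = {x | Irrational x} := by
  have hrat : Dense {x : ℝ | Irrational x}ᶜ := by
    have hrange : {x : ℝ | Irrational x}ᶜ = range ((↑) : ℚ → ℝ) := compl_compl _
    exact hrange ▸ Rat.denseRange_cast
  have hirr : Dense {x : ℝ | Irrational x} := dense_irrational
  have : PolishSpace {x : ℝ | Irrational x} := polishSpace_of_isGδ IsGδ.setOfPred_irrational
  have : Nonempty {x : ℝ | Irrational x} := hirr.nonempty.to_subtype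
  obtain ⟨e⟩ := nonempty_homeomorph_of_isCompact_interior_eq_empty
    (isTopologicalBasis_isClopen_subtype hrat)
    fun _ => interior_eq_empty_of_isCompact_subtype hirr hrat
  refine ⟨_, IsEmbedding.subtypeVal.comp e.isEmbedding, ?_⟩
  rw [e.surjective.range_comp, Subtype.range_coe]

end BaireSpace

/-! ### Sums and closed null sets -/

section CategoryMeasure

open Filter MeasureTheory Topology TopologicalSpace
open scoped ENNReal Pointwise

section AddGroup

variable {G : Type*} [AddGroup G] [TopologicalSpace G] [IsTopologicalAddGroup G] [SeparableSpace G]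
  [MeasurableSpace G] [BorelSpace G] {μ : Measure G} [μ.OuterRegular] [μ.IsAddLeftInvariant]
  {K F : Set G}

lemma exists_isOpen_dense_measure_le_of_isCompact (hK : IsCompact K) (hμK : μ K = 0) {ε : ℝ≥0∞}
    (hε : ε ≠ 0) : ∃ U : Set G, IsOpen U ∧ Dense U ∧ μ {s | ∃ l ∈ U, l + s ∈ K} ≤ ε := by
  obtain ⟨δ, hδ, hsum⟩ := ENNReal.exists_pos_sum_of_countable' hε ℕ
  have hnhds (n : ℕ) : ∃ V : Set G, IsOpen V ∧ 0 ∈ V ∧ μ (V + K) ≤ δ n := by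
    obtain ⟨O, hKO, hO, hμO⟩ := K.exists_isOpen_lt_of_lt (δ n) (hμK.symm ▸ hδ n)
    obtain ⟨V, hV, hVO⟩ := compact_open_separated_add_left hK hO hKO
    obtain ⟨W, hWV, hW, hW0⟩ := mem_nhds_iff.1 hV
    exact ⟨W, hW, hW0, (measure_mono ((add_subset_add_right hWV).trans hVO)).trans hμO.le⟩
  choose V hV hV0 hμV using hnhds
  let q := denseSeq G
  refine ⟨⋃ n, (fun l => q n - l) ⁻¹' V n,
    isOpen_iUnion fun n => (hV n).preimage (by fun_prop), ?_, ?_⟩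
  · refine (denseRange_denseSeq G).mono (range_subset_iff.2 fun n => mem_iUnion.2 ⟨n, ?_⟩)
    rw [mem_preimage, sub_self]
    exact hV0 n
  · have hcover : {s | ∃ l ∈ ⋃ n, (fun l => q n - l) ⁻¹' V n, l + s ∈ K} ⊆
        ⋃ n, (q n + ·) ⁻¹' (V n + K) := by
      rintro s ⟨l, hl, hls⟩
      obtain ⟨n, hn⟩ := mem_iUnion.1 hl
      refine mem_iUnion.2 ⟨n, ?_⟩
      rw [mem_preimage, ← sub_add_cancel (q n) l, add_assoc]
      exact add_mem_add hn hls
    calc μ {s | ∃ l ∈ ⋃ n, (fun l => q n - l) ⁻¹' V n, l + s ∈ K}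
        ≤ ∑' n, μ ((q n + ·) ⁻¹' (V n + K)) := measure_mono hcover |>.trans (measure_iUnion_le _)
      _ = ∑' n, μ (V n + K) := by simp only [measure_preimage_add]
      _ ≤ ∑' n, δ n := ENNReal.tsum_le_tsum hμV
      _ ≤ ε := hsum.le

lemma exists_mem_residual_measure_eq_zero_of_isCompact (hK : IsCompact K) (hμK : μ K = 0) :
    ∃ A ∈ residual G, μ {s | ∃ l ∈ A, l + s ∈ K} = 0 := by
  have hε (n : ℕ) : (n : ℝ≥0∞)⁻¹ ≠ 0 := ENNReal.inv_ne_zero.2 (ENNReal.natCast_ne_top n)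
  choose U hU hdense hμU using fun n => exists_isOpen_dense_measure_le_of_isCompact hK hμK (hε n)
  refine ⟨⋂ n, U n, countable_iInter_mem.2 fun n => residual_of_dense_open (hU n) (hdense n), ?_⟩
  refine le_antisymm (ge_of_tendsto' ENNReal.tendsto_inv_nat_nhds_zero fun n => ?_) zero_le
  refine (measure_mono ?_).trans (hμU n)
  rintro s ⟨l, hl, hls⟩
  exact ⟨l, mem_iInter.1 hl n, hls⟩

theorem exists_mem_residual_measure_eq_zero_of_isSigmaCompact (hF : IsSigmaCompact F)
    (hμF : μ F = 0) : ∃ A ∈ residual G, μ {s | ∃ l ∈ A, l + s ∈ F} = 0 := by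
  obtain ⟨K, hK, rfl⟩ := hF
  choose A hA hμA using fun n =>
    exists_mem_residual_measure_eq_zero_of_isCompact (hK n)
      (measure_mono_null (subset_iUnion K n) hμF)
  refine ⟨⋂ n, A n, countable_iInter_mem.2 hA, measure_mono_null ?_ (measure_iUnion_null hμA)⟩
  rintro s ⟨l, hl, hls⟩
  obtain ⟨n, hn⟩ := mem_iUnion.1 hls
  exact mem_iUnion.2 ⟨n, l, mem_iInter.1 hl n, hn⟩

end AddGroup

universe u

theorem mk_add_inter_lt_of_isRegular {G : Type u} [Add G] {κ : Cardinal.{u}} (hκ : κ.IsRegular)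
    {L S F A : Set G} (hLA : #↑(L ∩ Aᶜ) < κ) (hSA : #↑(S ∩ {s | ∃ l ∈ A, l + s ∈ F}) < κ)
    (hL : ∀ s ∈ S, #↑(L ∩ (· + s) ⁻¹' F) < κ) (hS : ∀ l ∈ L, #↑(S ∩ (l + ·) ⁻¹' F) < κ) :
    #↑((L + S) ∩ F) < κ := by
  let X (l : G) : Set G := (l + ·) '' (S ∩ (l + ·) ⁻¹' F)
  let Y (s : G) : Set G := (· + s) '' (L ∩ (· + s) ⁻¹' F)
  have hX : #↑(⋃ l ∈ L ∩ Aᶜ, X l) < κ :=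
    (card_biUnion_lt_iff_forall_of_isRegular hκ hLA).2 fun l hl => mk_image_le.trans_lt (hS l hl.1)
  have hY : #↑(⋃ s ∈ S ∩ {s | ∃ l ∈ A, l + s ∈ F}, Y s) < κ :=
    (card_biUnion_lt_iff_forall_of_isRegular hκ hSA).2 fun s hs => mk_image_le.trans_lt (hL s hs.1)
  have hcover : (L + S) ∩ F ⊆
      (⋃ l ∈ L ∩ Aᶜ, X l) ∪ ⋃ s ∈ S ∩ {s | ∃ l ∈ A, l + s ∈ F}, Y s := by
    rintro _ ⟨⟨l, hl, s, hs, rfl⟩, hls⟩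
    by_cases hlA : l ∈ A
    · exact .inr (mem_biUnion ⟨hs, l, hlA, hls⟩ (mem_image_of_mem (· + s) ⟨hl, hls⟩))
    · exact .inl (mem_biUnion ⟨hl, hlA⟩ (mem_image_of_mem (l + ·) ⟨hs, hls⟩))
  exact (mk_le_mk_of_subset hcover).trans_lt
    ((mk_union_le _ _).trans_lt (add_lt_of_lt hκ.aleph0_le hX hY))

theorem mk_add_inter_lt_of_isSigmaCompact {G : Type u} [AddGroup G] [TopologicalSpace G]
    [IsTopologicalAddGroup G] [SeparableSpace G] [T2Space G] [MeasurableSpace G] [BorelSpace G]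
    {μ : Measure G} [μ.OuterRegular] [μ.IsAddLeftInvariant] [μ.IsOpenPosMeasure]
    {κ : Cardinal.{u}} (hκ : κ.IsRegular) {L S F : Set G}
    (hL : ∀ M, IsMeagre M → #↑(L ∩ M) < κ) (hS : ∀ N, μ N = 0 → #↑(S ∩ N) < κ)
    (hF : IsSigmaCompact F) (hμF : μ F = 0) : #↑((L + S) ∩ F) < κ := by
  obtain ⟨A, hA, hμA⟩ := exists_mem_residual_measure_eq_zero_of_isSigmaCompact hF hμF
  have hmeagre : IsMeagre F := .of_isSigmaCompact_null hF hμF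
  refine mk_add_inter_lt_of_isRegular hκ (hL Aᶜ (by rwa [IsMeagre, compl_compl])) (hS _ hμA)
    (fun s _ => hL _ ?_) fun l _ => hS _ ?_
  · exact hmeagre.preimage_of_isOpenMap (continuous_add_const s) (isOpenMap_add_right s)
  · rw [measure_preimage_add, hμF]

end CategoryMeasure

/-! ### Tree ideals -/

section Ideal

open Function MeasureTheory Topology
open scoped Pointwise

lemma isClosed_treeBody (T : Set (List ℕ)) : IsClosed (treeBody T) := by
  have hbody : treeBody T = ⋂ n : ℕ, (fun x (i : Fin n) => x i) ⁻¹' {y | List.ofFn y ∈ T} := by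
    ext x
    simp only [treeBody, mem_ofPred_eq, mem_iInter, mem_preimage]
  rw [hbody]
  exact isClosed_iInter fun n => (isClosed_discrete _).preimage (by fun_prop)

lemma mk_nat_to_bool : #(ℕ → Bool) = 𝔠 := by
  simp only [mk_pi, mk_bool, prod_const, mk_nat, two_power_aleph0, lift_uzero]

variable {𝕋 : Set (Set (List ℕ))}

theorem SplitsIntoContinuum.mem_treeIdeal {A : Set (ℕ → ℕ)} (h𝕋 : SplitsIntoContinuum 𝕋)
    (hA : ∀ P ∈ 𝕋, ∃ Q ∈ 𝕋, Q ⊆ P ∧ #↑(A ∩ treeBody Q) < 𝔠) : A ∈ treeIdeal 𝕋 := by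
  intro P hP
  obtain ⟨Q, hQ, hQP, hcard⟩ := hA P hP
  obtain ⟨R, hR, hdisj⟩ := h𝕋 Q hQ
  suffices ∃ f, treeBody (R f) ∩ A = ∅ by
    obtain ⟨f, hf⟩ := this
    exact ⟨R f, (hR f).1, (hR f).2.trans hQP, hf⟩
  by_contra! hmeet
  choose x hxR hxA using hmeet
  have hxQ (f : ℕ → Bool) : x f ∈ A ∩ treeBody Q := ⟨hxA f, fun n => (hR f).2 (hxR f n)⟩
  have hinj : Injective x := by
    intro f g hfg
    by_contra hne
    exact Set.disjoint_left.1 (hdisj hne) (hxR f) (hfg ▸ hxR g)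
  have hle : 𝔠 ≤ #↑(A ∩ treeBody Q) :=
    calc 𝔠 = #(ℕ → Bool) := mk_nat_to_bool.symm
      _ = #(range x) := (mk_range_eq x hinj).symm
      _ ≤ #↑(A ∩ treeBody Q) := mk_le_mk_of_subset (range_subset_iff.2 hxQ)
  exact hle.not_gt hcard

theorem SplitsIntoContinuum.exists_measure_image_treeBody_eq_zero (h𝕋 : SplitsIntoContinuum 𝕋)
    {X : Type*} [MeasurableSpace X] (μ : Measure X) [SFinite μ] {h : (ℕ → ℕ) → X}
    (hh : MeasurableEmbedding h) {P : Set (List ℕ)} (hP : P ∈ 𝕋) :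
    ∃ Q ∈ 𝕋, Q ⊆ P ∧ μ (h '' treeBody Q) = 0 := by
  obtain ⟨Q, hQ, hdisj⟩ := h𝕋 P hP
  have hcount : {f | 0 < μ (h '' treeBody (Q f))}.Countable :=
    Measure.countable_meas_pos_of_disjoint_iUnion
      (fun f => hh.measurableSet_image.2 (isClosed_treeBody _).measurableSet)
      fun f g hfg => (disjoint_image_iff hh.injective).2 (hdisj hfg)
  obtain ⟨f, hf⟩ : ∃ f, μ (h '' treeBody (Q f)) = 0 := by
    by_contra! hpos
    have huncount : ¬ (Set.univ : Set (ℕ → Bool)).Countable := by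
      rw [← le_aleph0_iff_set_countable, mk_univ, mk_nat_to_bool]
      exact aleph0_lt_continuum.not_ge
    exact huncount (hcount.mono fun f _ => pos_iff_ne_zero.2 (hpos f))
  exact ⟨Q f, (hQ f).1, (hQ f).2, hf⟩

lemma measure_closure_image_eq_zero_of_isInducing {X Y : Type*} [TopologicalSpace X]
    [TopologicalSpace Y] [MeasurableSpace Y] {μ : Measure Y} {h : X → Y} (hh : IsInducing h)
    (hrange : μ (range h)ᶜ = 0) {C : Set X} (hC : IsClosed C) (hμC : μ (h '' C) = 0) :
    μ (closure (h '' C)) = 0 := by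
  refine measure_mono_null (fun y hy => ?_) (measure_union_null hμC hrange)
  refine or_iff_not_imp_right.2 fun hy' => ?_
  obtain ⟨x, rfl⟩ := not_not.1 hy'
  refine mem_image_of_mem h ?_
  rwa [← hC.closure_eq, hh.closure_eq_preimage_closure_image]

theorem preimage_add_mem_treeIdeal (h𝕋 : SplitsIntoContinuum 𝕋) {h : (ℕ → ℕ) → ℝ}
    (hh : IsEmbedding h) (hrange : volume (range h)ᶜ = 0) (hc : continuum.{0}.IsRegular)
    {L S : Set ℝ} (hL : IsGenLuzin L) (hS : IsGenSierpinski S) : h ⁻¹' (L + S) ∈ treeIdeal 𝕋 := by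
  have hle (X : Set ℝ) : #↑X ≤ 𝔠 := mk_real ▸ mk_set_le X
  refine h𝕋.mem_treeIdeal fun P hP => ?_
  obtain ⟨Q, hQ, hQP, hnull⟩ := h𝕋.exists_measure_image_treeBody_eq_zero volume
    (hh.continuous.measurableEmbedding hh.injective) hP
  refine ⟨Q, hQ, hQP, ?_⟩
  let F := closure (h '' treeBody Q)
  have hF : IsSigmaCompact F := isSigmaCompact_univ.of_isClosed_subset isClosed_closure
    (subset_univ F)
  have hcard : #↑((L + S) ∩ F) < 𝔠 :=
    mk_add_inter_lt_of_isSigmaCompact hc (fun M hM => (hL M hM).trans_le (hle L))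
      (fun N hN => (hS N hN).trans_le (hle S)) hF
      (measure_closure_image_eq_zero_of_isInducing hh.isInducing hrange (isClosed_treeBody Q) hnull)
  have hsub : h ⁻¹' (L + S) ∩ treeBody Q ⊆ h ⁻¹' ((L + S) ∩ F) := fun x hx =>
    ⟨hx.1, subset_closure (mem_image_of_mem h hx.2)⟩
  exact ((mk_le_mk_of_subset hsub).trans
    (mk_preimage_of_injective h _ hh.injective)).trans_lt hcard

lemma volume_compl_irrational : volume {x : ℝ | Irrational x}ᶜ = 0 := by
  have hrange : {x : ℝ | Irrational x}ᶜ = range ((↑) : ℚ → ℝ) := compl_compl _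
  rw [hrange]
  exact (countable_range _).measure_zero _

end Ideal

open Pointwise in
/-- via an embedding of Baire space onto the irrationals, if 𝔠 is regular
then L + S belongs to each of s₀, m₀, l₀, cl₀. -/
theorem stmt17 :
    ∃ h : (ℕ → ℕ) → ℝ, Topology.IsEmbedding h ∧ Set.range h = {x : ℝ | Irrational x} ∧
      (Cardinal.continuum.IsRegular →
        ∀ L S : Set ℝ, IsGenLuzin L → IsGenSierpinski S →
          h ⁻¹' (L + S) ∈ treeIdeal {T | IsSacksTree T} ∧
          h ⁻¹' (L + S) ∈ treeIdeal {T | IsMillerTree T} ∧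
          h ⁻¹' (L + S) ∈ treeIdeal {T | IsLaverTree T} ∧
          h ⁻¹' (L + S) ∈ treeIdeal {T | IsCompleteLaverTree T}) := by
  obtain ⟨h, hh, hrange⟩ := exists_isEmbedding_range_eq_irrational
  refine ⟨h, hh, hrange, fun hc L S hL hS => ?_⟩
  have hc₀ : Cardinal.IsRegular continuum.{0} := by
    rwa [← isRegular_lift_iff, lift_continuum]
  have hnull : MeasureTheory.volume (range h)ᶜ = 0 := hrange ▸ volume_compl_irrational
  have hmem {𝕋 : Set (Set (List ℕ))} (h𝕋 : SplitsIntoContinuum 𝕋) :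
      h ⁻¹' (L + S) ∈ treeIdeal 𝕋 :=
    preimage_add_mem_treeIdeal h𝕋 hh hnull hc₀ hL hS
  exact ⟨hmem splitsIntoContinuum_isSacksTree, hmem splitsIntoContinuum_isMillerTree,
    hmem splitsIntoContinuum_isLaverTree, hmem splitsIntoContinuum_isCompleteLaverTree⟩
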